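/- arXiv:1302.3078 — 3 statements merged into one kernel-verified Lean document; each statement's English description precedes it below -/
import Mathlib

section
/- Let G be a cyclic group of prime order p ≥ 5 and S a zero-sum sequence over G∖{0}. Then min L(S) ≤ min{ |S|/2, 2|S|/(p+5) + 2(p−1)(1/2 + log((p+3)/2)) }, where min L(S) is the minimal number of minimal zero-sum sequences into which S factors. -/
/-- A minimal zero-sum sequence over an abelian group. -/
def IsMinZS {G : Type*} [AddCommGroup G] (S : Multiset G) : Prop :=
  S ≠ 0 ∧ S.sum = 0 ∧ ∀ T : Multiset G, T ≤ S → T ≠ 0 → T ≠ S → T.sum ≠ 0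

/-- The minimal length of a factorization of a zero-sum sequence into
minimal zero-sum sequences. -/
noncomputable def minL {G : Type*} [AddCommGroup G] (S : Multiset G) : ℕ :=
  sInf { n | ∃ F : Multiset (Multiset G),
    (∀ B ∈ F, IsMinZS B) ∧ F.sum = S ∧ Multiset.card F = n }

open scoped Classical in
theorem aux_exists_fact {G : Type*} [AddCommGroup G] :
    ∀ (n : ℕ) (S : Multiset G), Multiset.card S = n → S.sum = 0 →
      ∃ F : Multiset (Multiset G), (∀ B ∈ F, IsMinZS B) ∧ F.sum = S := by
  intro n
  induction n using Nat.strong_induction_on with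
  | _ n ih =>
    intro S hn hS
    by_cases h0 : S = 0
    · exact ⟨0, by simp, by simp [h0]⟩
    by_cases hm : IsMinZS S
    · exact ⟨{S}, by simpa using hm, by simp⟩
    have : ∃ T : Multiset G, T ≤ S ∧ T ≠ 0 ∧ T ≠ S ∧ T.sum = 0 := by
      by_contra hcon
      apply hm
      refine ⟨h0, hS, ?_⟩
      intro T h1 h2 h3 h4
      exact hcon ⟨T, h1, h2, h3, h4⟩
    obtain ⟨T, hTS, hT0, hTne, hTs⟩ := this
    obtain ⟨R, rfl⟩ := Multiset.le_iff_exists_add.1 hTS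
    have hR0 : R ≠ 0 := by
      rintro rfl
      simp at hTne
    have hcT : 0 < Multiset.card T := Multiset.card_pos.2 hT0
    have hcR : 0 < Multiset.card R := Multiset.card_pos.2 hR0
    rw [Multiset.card_add] at hn
    rw [Multiset.sum_add, hTs, zero_add] at hS
    obtain ⟨F1, h11, h12⟩ := ih _ (by omega) T rfl hTs
    obtain ⟨F2, h21, h22⟩ := ih _ (by omega) R rfl hS
    refine ⟨F1 + F2, ?_, by rw [Multiset.sum_add, h12, h22]⟩
    intro B hB
    rcases Multiset.mem_add.1 hB with h | h
    · exact h11 B h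
    · exact h21 B h

theorem aux_mem_sum {G : Type*} (F : Multiset (Multiset G)) (g : G) :
    g ∈ F.sum ↔ ∃ B ∈ F, g ∈ B := by
  induction F using Multiset.induction_on with
  | empty => simp
  | cons B F ih => simp [ih]

/-- If each block contains an element satisfying `P`, the number of blocks is at most
the number of elements of the sum satisfying `P`. -/
theorem aux_card_le {G : Type*} [AddCommGroup G] (P : G → Prop) [DecidablePred P] (k : ℕ)
    (F : Multiset (Multiset G)) (h : ∀ B ∈ F, k ≤ Multiset.countP P B) :
    Multiset.card F * k ≤ Multiset.countP P F.sum := by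
  induction F using Multiset.induction_on with
  | empty => simp
  | cons B F ih =>
    have h1 := h B (Multiset.mem_cons_self B F)
    have h2 := ih (fun C hC => h C (Multiset.mem_cons_of_mem hC))
    rw [Multiset.sum_cons, Multiset.countP_add, Multiset.card_cons]
    nlinarith

theorem aux_order {G : Type*} [AddCommGroup G] [Fintype G] {p : ℕ} (hp : p.Prime)
    (hcard : Fintype.card G = p) {g : G} (hg : g ≠ 0) : addOrderOf g = p := by
  have h := addOrderOf_dvd_card (x := g)
  rw [hcard] at h
  rcases (Nat.dvd_prime hp).1 h with h | h
  · exact absurd (AddMonoid.addOrderOf_eq_one_iff.1 h) hg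
  · exact h

open scoped Classical Pointwise in
theorem aux_cd {G : Type*} [AddCommGroup G] [Fintype G] {p : ℕ} (hp : p.Prime)
    (hcard : Fintype.card G = p) (A : Finset G) (hA : (0 : G) ∉ A) (r : ℕ) :
    min p (r * A.card + 1) ≤ (Finset.univ.filter (fun y : G =>
      ∃ U : Multiset G, Multiset.card U ≤ r ∧ (∀ x ∈ U, x ∈ A) ∧ U.sum = y)).card := by
  induction r with
  | zero =>
    have : (0 : G) ∈ (Finset.univ.filter (fun y : G =>
      ∃ U : Multiset G, Multiset.card U ≤ 0 ∧ (∀ x ∈ U, x ∈ A) ∧ U.sum = y)) := by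
      simp only [Finset.mem_filter, Finset.mem_univ, true_and]
      exact ⟨0, by simp, by simp, by simp⟩
    have := Finset.card_pos.2 ⟨_, this⟩
    have h1 := min_le_right p (0 * A.card + 1)
    omega
  | succ r ih =>
    set R := (Finset.univ.filter (fun y : G =>
      ∃ U : Multiset G, Multiset.card U ≤ r ∧ (∀ x ∈ U, x ∈ A) ∧ U.sum = y)) with hR
    set R' := (Finset.univ.filter (fun y : G =>
      ∃ U : Multiset G, Multiset.card U ≤ r + 1 ∧ (∀ x ∈ U, x ∈ A) ∧ U.sum = y)) with hR'
    have hsub : R + insert 0 A ⊆ R' := by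
      intro y hy
      obtain ⟨a, ha, b, hb, rfl⟩ := Finset.mem_add.1 hy
      simp only [hR, Finset.mem_filter, Finset.mem_univ, true_and] at ha
      obtain ⟨U, hU1, hU2, hU3⟩ := ha
      simp only [hR', Finset.mem_filter, Finset.mem_univ, true_and]
      rcases Finset.mem_insert.1 hb with rfl | hb
      · exact ⟨U, by omega, hU2, by simp [hU3]⟩
      · refine ⟨b ::ₘ U, by simpa using hU1, ?_, by rw [Multiset.sum_cons, hU3, add_comm]⟩
        intro x hx
        rcases Multiset.mem_cons.1 hx with rfl | hx
        · exact hb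
        · exact hU2 x hx
    have hRne : R.Nonempty := by
      refine ⟨0, ?_⟩
      simp only [hR, Finset.mem_filter, Finset.mem_univ, true_and]
      exact ⟨0, by simp, by simp, by simp⟩
    have hcd := cauchy_davenport_minOrder_add (s := R) (t := insert 0 A) hRne
      (Finset.insert_nonempty _ _)
    have hmo : (p : ℕ∞) ≤ AddMonoid.minOrder G := by
      rw [AddMonoid.le_minOrder]
      intro a ha _
      rw [aux_order hp hcard ha]
    have h2 : min (p : ℕ∞) ((R.card + (insert 0 A).card - 1 : ℕ) : ℕ∞)
        ≤ ((R + insert 0 A).card : ℕ∞) :=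
      le_trans (min_le_min_right _ hmo) hcd
    rw [Finset.card_insert_of_notMem hA] at h2
    have h3 : min p (R.card + (A.card + 1) - 1) ≤ (R + insert 0 A).card := by
      rw [min_le_iff] at h2 ⊢
      exact_mod_cast h2
    have h4 := Finset.card_le_card hsub
    have h5 : (r + 1) * A.card = r * A.card + A.card := by ring
    rw [h5]
    omega

/-- the bound -/
def auxF (p d : ℕ) : ℕ := ∑ e ∈ Finset.Ico 1 d, ((p - 2) / e + 1)

open scoped Classical in
/-- Kill one element of the support. -/
theorem aux_kill {G : Type*} [AddCommGroup G] [Fintype G] {p : ℕ} (hp : p.Prime)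
    (hcard : Fintype.card G = p) (T : Multiset G) (h0 : ∀ g ∈ T, g ≠ 0) (hsum : T.sum = 0)
    (hlt : ∀ g, T.count g < p) (d : ℕ) (hd : T.toFinset.card = d + 1) :
    1 ≤ d ∧ ∃ g ∈ T, ∃ X Y : Multiset G, X + Y = T ∧ Y.sum = 0 ∧ g ∉ Y ∧
      ∃ F : Multiset (Multiset G), (∀ B ∈ F, IsMinZS B) ∧ F.sum = X ∧
        Multiset.card F ≤ (p - 2) / d + 1 := by
  have h2p := hp.two_le
  have hne : T.toFinset.Nonempty := Finset.card_pos.1 (by omega)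
  obtain ⟨g, hgT, hgmin⟩ := Finset.exists_min_image T.toFinset (fun x => T.count x) hne
  have hgT' : g ∈ T := Multiset.mem_toFinset.1 hgT
  have hg0 := h0 g hgT'
  have hord := aux_order hp hcard hg0
  have hnot : ∀ j, 0 < j → j < p → j • g ≠ 0 := by
    intro j hj hjp h
    have := addOrderOf_dvd_of_nsmul_eq_zero h
    rw [hord] at this
    exact absurd (Nat.le_of_dvd hj this) (by omega)
  have hv0 : 0 < T.count g := Multiset.count_pos.2 hgT'
  have hA : (T.toFinset.erase g).card = d := by
    rw [Finset.card_erase_of_mem hgT]; omega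
  have hd1 : 1 ≤ d := by
    by_contra hcon
    have hd0 : d = 0 := by omega
    have he : T.toFinset.erase g = ∅ := Finset.card_eq_zero.1 (by omega)
    have hrep : T = Multiset.replicate (Multiset.card T) g := by
      apply Multiset.eq_replicate_card.2
      intro b hb
      by_contra hbg
      have : b ∈ T.toFinset.erase g := Finset.mem_erase.2 ⟨hbg, Multiset.mem_toFinset.2 hb⟩
      rw [he] at this
      simp at this
    have hc : T.count g = Multiset.card T := by
      conv_lhs => rw [hrep]
      simp
    rw [hrep, Multiset.sum_replicate] at hsum
    exact hnot _ (by omega) (by rw [← hc]; exact hlt g) hsum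
  refine ⟨hd1, g, hgT', ?_⟩
  set r := (p - 2) / d + 1 with hr
  by_cases hvr : T.count g < r
  · obtain ⟨F, hF1, hF2⟩ := aux_exists_fact _ T rfl hsum
    refine ⟨(F.filter (fun B => g ∈ B)).sum, (F.filter (fun B => ¬ g ∈ B)).sum, ?_, ?_, ?_,
      F.filter (fun B => g ∈ B), ?_, rfl, ?_⟩
    · rw [← Multiset.sum_add, Multiset.filter_add_not, hF2]
    · have : ∀ F' : Multiset (Multiset G), (∀ B ∈ F', B.sum = 0) → F'.sum.sum = 0 := by
        intro F'
        induction F' using Multiset.induction_on with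
        | empty => simp
        | cons B F' ih =>
          intro h
          rw [Multiset.sum_cons, Multiset.sum_add, h B (Multiset.mem_cons_self _ _),
            ih (fun C hC => h C (Multiset.mem_cons_of_mem hC)), add_zero]
      exact this _ (fun B hB => (hF1 B (Multiset.mem_filter.1 hB).1).2.1)
    · intro h
      obtain ⟨B, hB, hgB⟩ := (aux_mem_sum _ _).1 h
      exact (Multiset.mem_filter.1 hB).2 hgB
    · intro B hB
      exact hF1 B (Multiset.mem_filter.1 hB).1
    · have h1 := aux_card_le (fun x => g = x) 1 (F.filter (fun B => g ∈ B)) (by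
        intro B hB
        exact Multiset.countP_pos.2 ⟨g, (Multiset.mem_filter.1 hB).2, rfl⟩)
      have h2 : (F.filter (fun B => g ∈ B)).sum ≤ T := by
        rw [← hF2]
        conv_rhs => rw [← Multiset.filter_add_not (fun B => g ∈ B) F, Multiset.sum_add]
        exact Multiset.le_add_right _ _
      have h3 := Multiset.countP_le_of_le (fun x => g = x) h2
      have h4 : Multiset.countP (fun x => g = x) T = T.count g := by
        unfold Multiset.count
        congr
      omega
  · push Not at hvr
    have hcd := aux_cd hp hcard (T.toFinset.erase g) (by
      intro h
      exact h0 0 (Multiset.mem_toFinset.1 (Finset.mem_of_mem_erase h)) rfl) r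
    rw [hA] at hcd
    have hrd : p ≤ r * d + 1 := by
      have := Nat.lt_div_mul_add (a := p - 2) (b := d) (by omega)
      have h' : r * d = (p - 2) / d * d + d := by rw [hr]; ring
      omega
    rw [min_eq_left hrd] at hcd
    have huniv := Finset.eq_univ_of_card _ (le_antisymm (Finset.card_le_univ _) (hcard.trans_le hcd))
    have hmem := Finset.mem_univ (-(T.count g • g))
    rw [← huniv] at hmem
    simp only [Finset.mem_filter, Finset.mem_univ, true_and] at hmem
    obtain ⟨U, hU1, hU2, hU3⟩ := hmem
    have hgU : g ∉ U := fun h => by simpa using hU2 g h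
    have hle : Multiset.replicate (T.count g) g + U ≤ T := by
      rw [Multiset.le_iff_count]
      intro x
      rw [Multiset.count_add, Multiset.count_replicate]
      by_cases hx : g = x
      · subst hx
        rw [if_pos rfl, Multiset.count_eq_zero_of_notMem hgU]; simp
      · rw [if_neg hx, zero_add]
        by_cases hxU : x ∈ U
        · have h1 := Multiset.count_le_card x U
          have h2 := hgmin x (Finset.mem_of_mem_erase (hU2 x hxU))
          omega
        · rw [Multiset.count_eq_zero_of_notMem hxU]; omega
    obtain ⟨Y, hY⟩ := Multiset.le_iff_exists_add.1 hle
    have hXs : (Multiset.replicate (T.count g) g + U).sum = 0 := by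
      rw [Multiset.sum_add, Multiset.sum_replicate, hU3, add_neg_cancel]
    obtain ⟨F, hF1, hF2⟩ := aux_exists_fact _ _ rfl hXs
    refine ⟨_, Y, hY.symm, ?_, ?_, F, hF1, hF2, ?_⟩
    · have := hsum
      rw [hY, Multiset.sum_add, hXs, zero_add] at this
      exact this
    · intro h
      have h1 := Multiset.count_pos.2 h
      have h2 := congrArg (Multiset.count g) hY
      rw [Multiset.count_add, Multiset.count_add, Multiset.count_replicate_self] at h2
      omega
    · have h1 := aux_card_le (fun x => x ≠ g) 1 F (by
        intro B hB
        by_contra hcon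
        have hz : Multiset.countP (fun x => x ≠ g) B = 0 := by omega
        rw [Multiset.countP_eq_zero] at hz
        have hrep : B = Multiset.replicate (Multiset.card B) g :=
          Multiset.eq_replicate_card.2 (fun b hb => by simpa using hz b hb)
        obtain ⟨hB0, hBs, -⟩ := hF1 B hB
        have hBT : B ≤ T := by
          refine le_trans ?_ hle
          rw [← hF2]
          exact Multiset.le_sum_of_mem hB
        have hc : Multiset.card B < p := by
          have h3 := Multiset.count_le_of_le g hBT
          have h4 : B.count g = Multiset.card B := by
            conv_lhs => rw [hrep]
            simp
          have := hlt g
          omega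
        rw [hrep, Multiset.sum_replicate] at hBs
        exact hnot _ (Multiset.card_pos.2 hB0) hc hBs)
      rw [hF2, Multiset.countP_add] at h1
      have h2 : Multiset.countP (fun x => x ≠ g) (Multiset.replicate (T.count g) g) = 0 := by
        rw [Multiset.countP_eq_zero]
        intro a ha
        simpa using Multiset.eq_of_mem_replicate ha
      have h3 := Multiset.countP_le_card (fun x => x ≠ g) U
      omega

open scoped Classical in
theorem aux_small {G : Type*} [AddCommGroup G] [Fintype G] {p : ℕ} (hp : p.Prime)
    (hcard : Fintype.card G = p) : ∀ (n : ℕ) (T : Multiset G), T.toFinset.card = n →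
    (∀ g ∈ T, g ≠ 0) → T.sum = 0 → (∀ g, T.count g < p) →
    ∃ F : Multiset (Multiset G), (∀ B ∈ F, IsMinZS B) ∧ F.sum = T ∧
      Multiset.card F ≤ auxF p n := by
  intro n
  induction n using Nat.strong_induction_on with
  | _ n ih =>
    intro T hn h0 hsum hlt
    rcases n with _ | d
    · have : T = 0 := by
        rw [Finset.card_eq_zero] at hn
        exact Multiset.toFinset_eq_empty.1 hn
      exact ⟨0, by simp, by simp [this], by simp⟩
    · obtain ⟨hd1, g, hg, X, Y, hXY, hYs, hgY, F, hF1, hF2, hF3⟩ :=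
        aux_kill hp hcard T h0 hsum hlt d hn
      have hYT : Y ≤ T := by rw [← hXY]; exact Multiset.le_add_left _ _
      have hsub : Y.toFinset ⊆ T.toFinset.erase g := by
        intro x hx
        rw [Multiset.mem_toFinset] at hx
        refine Finset.mem_erase.2 ⟨fun h => hgY (h ▸ hx), ?_⟩
        exact Multiset.mem_toFinset.2 (Multiset.mem_of_le hYT hx)
      have hYc : Y.toFinset.card ≤ d := by
        have := Finset.card_le_card hsub
        rw [Finset.card_erase_of_mem (Multiset.mem_toFinset.2 hg)] at this
        omega
      obtain ⟨F', h1, h2, h3⟩ := ih Y.toFinset.card (by omega) Y rfl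
        (fun x hx => h0 x (Multiset.mem_of_le hYT hx)) hYs
        (fun x => lt_of_le_of_lt (Multiset.count_le_of_le x hYT) (hlt x))
      refine ⟨F + F', ?_, by rw [Multiset.sum_add, hF2, h2, hXY], ?_⟩
      · intro B hB
        rcases Multiset.mem_add.1 hB with h | h
        · exact hF1 B h
        · exact h1 B h
      · have hmono : auxF p Y.toFinset.card ≤ auxF p d := by
          unfold auxF
          exact Finset.sum_le_sum_of_subset (Finset.Ico_subset_Ico_right hYc)
        have hs : auxF p (d + 1) = auxF p d + ((p - 2) / d + 1) := by
          unfold auxF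
          rw [Finset.sum_Ico_succ_top hd1]
        rw [Multiset.card_add, hs]
        omega

open scoped Classical in
theorem aux_all {G : Type*} [AddCommGroup G] [Fintype G] {p : ℕ} (hp : p.Prime)
    (hcard : Fintype.card G = p) : ∀ (n : ℕ) (T : Multiset G), Multiset.card T = n →
    (∀ g ∈ T, g ≠ 0) → T.sum = 0 →
    ∃ F : Multiset (Multiset G), (∀ B ∈ F, IsMinZS B) ∧ F.sum = T ∧
      p * Multiset.card F ≤ n + p * auxF p (p - 1) := by
  intro n
  induction n using Nat.strong_induction_on with
  | _ n ih =>
    intro T hn h0 hsum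
    have hp0 := hp.pos
    by_cases hlt : ∀ g, T.count g < p
    · obtain ⟨F, h1, h2, h3⟩ := aux_small hp hcard _ T rfl h0 hsum hlt
      refine ⟨F, h1, h2, ?_⟩
      have hc : T.toFinset.card ≤ p - 1 := by
        have hs : T.toFinset ⊆ Finset.univ.erase (0 : G) := by
          intro x hx
          exact Finset.mem_erase.2 ⟨h0 x (Multiset.mem_toFinset.1 hx), Finset.mem_univ _⟩
        have := Finset.card_le_card hs
        rwa [Finset.card_erase_of_mem (Finset.mem_univ _), Finset.card_univ, hcard] at this
      have hmono : auxF p T.toFinset.card ≤ auxF p (p - 1) := by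
        unfold auxF
        exact Finset.sum_le_sum_of_subset (Finset.Ico_subset_Ico_right hc)
      have := Nat.mul_le_mul_left p (h3.trans hmono)
      omega
    · push Not at hlt
      obtain ⟨g, hg⟩ := hlt
      have hgT : g ∈ T := Multiset.count_pos.1 (by omega)
      have hord := aux_order hp hcard (h0 g hgT)
      obtain ⟨Y, rfl⟩ := Multiset.le_iff_exists_add.1 (Multiset.le_count_iff_replicate_le.1 hg)
      have hz : (Multiset.replicate p g).sum = 0 := by
        rw [Multiset.sum_replicate, ← hord]
        exact addOrderOf_nsmul_eq_zero g
      have hat : IsMinZS (Multiset.replicate p g) := by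
        refine ⟨?_, hz, ?_⟩
        · intro h
          have := congrArg Multiset.card h
          simp at this
          omega
        · intro B hB hB0 hBne hBs
          obtain ⟨k, hk, rfl⟩ := Multiset.le_replicate_iff.1 hB
          rw [Multiset.sum_replicate] at hBs
          have hd := addOrderOf_dvd_of_nsmul_eq_zero hBs
          rw [hord] at hd
          have hk0 : 0 < k := by
            rcases Nat.eq_zero_or_pos k with rfl | h
            · simp at hB0
            · exact h
          have := Nat.le_of_dvd hk0 hd
          exact hBne (by rw [le_antisymm hk this])
      rw [Multiset.card_add, Multiset.card_replicate] at hn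
      rw [Multiset.sum_add, hz, zero_add] at hsum
      obtain ⟨F, h1, h2, h3⟩ := ih (Multiset.card Y) (by omega) Y rfl
        (fun x hx => h0 x (Multiset.mem_add.2 (Or.inr hx))) hsum
      refine ⟨Multiset.replicate p g ::ₘ F, ?_, by rw [Multiset.sum_cons, h2], ?_⟩
      · intro B hB
        rcases Multiset.mem_cons.1 hB with rfl | h
        · exact hat
        · exact h1 B h
      · rw [Multiset.card_cons, Nat.mul_add]
        omega

theorem auxF_le (p : ℕ) (h5 : 5 ≤ p) :
    (auxF p (p - 1) : ℝ) ≤ 2 * ((p : ℝ) - 1) * (1 / 2 + Real.log (((p : ℝ) + 3) / 2)) := by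
  obtain ⟨q, rfl⟩ : ∃ q, p = q + 2 := ⟨p - 2, by omega⟩
  have hq3 : (3 : ℝ) ≤ q := by exact_mod_cast (by omega : 3 ≤ q)
  have h1 : (auxF (q + 2) (q + 2 - 1) : ℝ) ≤ q * (harmonic q : ℝ) + q := by
    unfold auxF
    rw [harmonic_eq_sum_Icc]
    have he : Finset.Ico 1 (q + 2 - 1) = Finset.Icc 1 q := by
      ext x; simp only [Finset.mem_Ico, Finset.mem_Icc]; omega
    rw [he]
    push_cast
    rw [Finset.sum_add_distrib, Finset.mul_sum]
    apply add_le_add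
    · apply Finset.sum_le_sum
      intro i _
      have := Nat.cast_div_le (α := ℝ) (m := q + 2 - 2) (n := i)
      simpa [div_eq_mul_inv] using this
    · simp
  have h2 := harmonic_le_one_add_log q
  have h3 : 1 + Real.log q ≤ 2 * Real.log (((q : ℝ) + 2 + 3) / 2) := by
    have e1 : 1 + Real.log q = Real.log (Real.exp 1 * q) := by
      rw [Real.log_mul (Real.exp_pos 1).ne' (by positivity), Real.log_exp]
    have e2 : 2 * Real.log (((q : ℝ) + 2 + 3) / 2) = Real.log ((((q : ℝ) + 2 + 3) / 2) ^ 2) := by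
      rw [Real.log_pow]; norm_num
    rw [e1, e2]
    apply Real.log_le_log (by positivity)
    have := Real.exp_one_lt_d9
    nlinarith [sq_nonneg ((q : ℝ) - 1)]
  have h4 : 0 ≤ Real.log q := Real.log_nonneg (by linarith)
  refine h1.trans ?_
  set L := Real.log (((q : ℝ) + 2 + 3) / 2) with hL
  have hL' : Real.log ((((q + 2 : ℕ) : ℝ) + 3) / 2) = L := by rw [hL]; push_cast; rfl
  rw [hL']
  have h6 : (harmonic q : ℝ) ≤ 2 * L := h2.trans h3
  have h7 : (q : ℝ) * (harmonic q : ℝ) ≤ q * (2 * L) :=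
    mul_le_mul_of_nonneg_left h6 (by linarith)
  push_cast
  linarith

theorem stmt9 (G : Type*) [AddCommGroup G] [Fintype G] (hcyc : IsAddCyclic G)
    (p : ℕ) (hp : p.Prime) (hcard : Fintype.card G = p) (h5 : 5 ≤ p)
    (S : Multiset G) (h0 : ∀ g ∈ S, g ≠ 0) (hsum : S.sum = 0) :
    (minL S : ℝ) ≤ min ((Multiset.card S : ℝ) / 2)
      (2 * (Multiset.card S : ℝ) / (p + 5) +
        2 * ((p : ℝ) - 1) * (1 / 2 + Real.log (((p : ℝ) + 3) / 2))) := by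
  classical
  obtain ⟨F, h1, h2, h3⟩ := aux_all hp hcard _ S rfl h0 hsum
  have hle : minL S ≤ Multiset.card F := Nat.sInf_le ⟨F, h1, h2, rfl⟩
  have hleR : (minL S : ℝ) ≤ Multiset.card F := by exact_mod_cast hle
  apply le_min
  · have h4 := aux_card_le (fun _ : G => True) 2 F (by
      intro B hB
      have hc : Multiset.countP (fun _ : G => True) B = Multiset.card B := by simp
      rw [hc]
      obtain ⟨hB0, hBs, -⟩ := h1 B hB
      by_contra hcon
      have hpos := Multiset.card_pos.2 hB0
      obtain ⟨a, rfl⟩ := Multiset.card_eq_one.1 (by omega : Multiset.card B = 1)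
      have haS : a ∈ S := by
        rw [← h2]
        exact (aux_mem_sum _ _).2 ⟨_, hB, by simp⟩
      exact h0 a haS (by simpa using hBs))
    rw [h2] at h4
    have h5 := h4.trans (Multiset.countP_le_card _ S)
    have h6 : (Multiset.card F : ℝ) * 2 ≤ Multiset.card S := by exact_mod_cast h5
    linarith
  · have hF := auxF_le p h5
    have hpR : (5 : ℝ) ≤ p := by exact_mod_cast h5
    have h3R : (p : ℝ) * Multiset.card F ≤ Multiset.card S + p * auxF p (p - 1) := by
      exact_mod_cast h3
    have h6 : (Multiset.card F : ℝ) ≤ Multiset.card S / p + auxF p (p - 1) := by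
      rw [div_add' _ _ _ (by positivity), le_div_iff₀ (by positivity)]
      linarith
    have h7 : (Multiset.card S : ℝ) / p ≤ 2 * Multiset.card S / (p + 5) := by
      rw [div_le_div_iff₀ (by positivity) (by positivity)]
      have : (0 : ℝ) ≤ Multiset.card S := by positivity
      nlinarith
    linarith
end

section
/- Let G be a cyclic group of order n = p^α with p prime and α ≥ 2, and let S be a zero-sum sequence over G all of whose terms have order n. Then min L(S) ≤ min{ |S|/2, 2|S|/(n+1) + 3(n−1)(1/2 + log(n/2)) }. -/
open Classical in
/-- Chowla's theorem for sets of generators. -/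
theorem chowla_aux {G : Type*} [AddCommGroup G] [Fintype G] (k : ℕ) :
    ∀ (A B : Finset G), B.card ≤ k → A.Nonempty → (0 : G) ∈ B →
      (∀ b ∈ B, b ≠ 0 → addOrderOf b = Fintype.card G) →
      ∃ C : Finset G, (∀ c ∈ C, ∃ a ∈ A, ∃ b ∈ B, a + b = c) ∧
        min (Fintype.card G) (A.card + B.card - 1) ≤ C.card := by
  induction k with
  | zero =>
    intro A B hB _ h0 _
    have : B = ∅ := Finset.card_eq_zero.mp (by omega)
    simp [this] at h0
  | succ k ih =>
    intro A B hB hA h0 hgen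
    by_cases hAu : A = Finset.univ
    · refine ⟨A, fun c hc => ⟨c, hc, 0, h0, by simp⟩, ?_⟩
      rw [hAu]
      simp
    by_cases hB0 : ∃ b ∈ B, b ≠ 0
    · obtain ⟨b, hb, hb0⟩ := hB0
      have hab : ∃ a ∈ A, a + b ∉ A := by
        by_contra hcon
        push Not at hcon
        apply hAu
        obtain ⟨a, ha⟩ := hA
        have hk : ∀ j : ℕ, a + j • b ∈ A := by
          intro j
          induction j with
          | zero => simpa using ha
          | succ j ihj =>
            have := hcon _ ihj
            rwa [add_assoc, ← succ_nsmul] at this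
        ext x
        simp only [Finset.mem_univ, iff_true]
        have hx : x - a ∈ AddSubgroup.zmultiples b := by
          have : AddSubgroup.zmultiples b = ⊤ := by
            apply AddSubgroup.eq_top_of_card_eq
            rw [Nat.card_zmultiples, hgen b hb hb0, Nat.card_eq_fintype_card]
          rw [this]; trivial
        have hx2 := (mem_multiples_iff_mem_zmultiples (x := b) (y := x - a)).mpr hx
        obtain ⟨j, hj⟩ := AddSubmonoid.mem_multiples_iff _ _ |>.mp hx2
        have := hk j
        rw [hj] at this
        simpa using this
      obtain ⟨a, ha, hab⟩ := hab
      set B' := B.filter (fun x => a + x ∈ A) with hB'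
      set D := (B.filter (fun x => ¬ a + x ∈ A)).image (fun x => a + x) with hD
      have hcD : D.card = (B.filter (fun x => ¬ a + x ∈ A)).card :=
        Finset.card_image_of_injective _ (add_right_injective a)
      have hsplit := Finset.card_filter_add_card_filter_not (s := B) (fun x => a + x ∈ A)
      rw [← hB'] at hsplit
      have hdisj : Disjoint A D := by
        rw [Finset.disjoint_left]
        intro x hx hxD
        simp only [hD, Finset.mem_image, Finset.mem_filter] at hxD
        obtain ⟨y, ⟨_, hy⟩, rfl⟩ := hxD
        exact hy hx
      have hcard : (A ∪ D).card = A.card + D.card := Finset.card_union_of_disjoint hdisj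
      have hpos : 0 < (B.filter (fun x => ¬ a + x ∈ A)).card :=
        Finset.card_pos.mpr ⟨b, by simp [hb, hab]⟩
      obtain ⟨C, hC, hCc⟩ := ih (A ∪ D) B' (by omega)
        (hA.mono Finset.subset_union_left) (by simp [hB', h0, ha])
        (fun x hx => hgen x (Finset.mem_of_mem_filter x hx))
      refine ⟨C, ?_, ?_⟩
      · intro c hc
        obtain ⟨x, hx, y, hy, rfl⟩ := hC c hc
        rw [hB', Finset.mem_filter] at hy
        rcases Finset.mem_union.mp hx with hx | hx
        · exact ⟨x, hx, y, hy.1, rfl⟩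
        · simp only [hD, Finset.mem_image, Finset.mem_filter] at hx
          obtain ⟨z, ⟨hz, _⟩, rfl⟩ := hx
          exact ⟨a + y, hy.2, z, hz, by abel⟩
      · have : (A ∪ D).card + B'.card = A.card + B.card := by omega
        rwa [this] at hCc
    · push Not at hB0
      refine ⟨A, fun c hc => ⟨c, hc, 0, h0, by simp⟩, ?_⟩
      have : B ⊆ {0} := fun x hx => by simp [hB0 x hx]
      have := Finset.card_le_card this
      simp at this
      omega

open Classical in
/-- Short subsums of a sequence of generators. -/
theorem subsums_aux {G : Type*} [AddCommGroup G] [Fintype G] (l : ℕ) :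
    ∀ U : Multiset G, (∀ g ∈ U, addOrderOf g = Fintype.card G) → (0 : G) ∉ U →
      ∃ C : Finset G, (∀ c ∈ C, ∃ W ≤ U, Multiset.card W ≤ l ∧ W.sum = c) ∧
        min (Fintype.card G) (1 + ∑ g : G, min (U.count g) l) ≤ C.card := by
  induction l with
  | zero =>
    intro U _ _
    exact ⟨{0}, fun c hc => ⟨0, by simp, by simp, by simpa using (Finset.mem_singleton.mp hc).symm⟩,
      by simp⟩
  | succ l ih =>
    intro U hU h0
    have hdle : U.dedup ≤ U := Multiset.dedup_le U
    have hle : U - U.dedup ≤ U := Multiset.sub_le_self _ _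
    obtain ⟨A, hA, hAc⟩ := ih (U - U.dedup)
      (fun g hg => hU g (Multiset.mem_of_le hle hg))
      (fun hg => h0 (Multiset.mem_of_le hle hg))
    have hApos : 0 < A.card := by
      have : 0 < Fintype.card G := Fintype.card_pos
      omega
    have h0' : (0 : G) ∉ U.toFinset := by simpa using h0
    obtain ⟨C, hC, hCc⟩ := chowla_aux _ A (insert 0 U.toFinset) le_rfl
      (Finset.card_pos.mp hApos) (by simp)
      (by
        intro b hb hb0
        rcases Finset.mem_insert.mp hb with h | h
        · exact absurd h hb0
        · exact hU b (by simpa using h))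
    refine ⟨C, ?_, ?_⟩
    · intro c hc
      obtain ⟨a, ha, b, hb, rfl⟩ := hC c hc
      obtain ⟨W, hW, hWc, rfl⟩ := hA a ha
      rcases Finset.mem_insert.mp hb with h | h
      · exact ⟨W, hW.trans hle, by omega, by simp [h]⟩
      · refine ⟨W + {b}, ?_, by simp; omega, by simp⟩
        have hb1 : ({b} : Multiset G) ≤ U.dedup := by
          simpa using h
        calc W + {b} ≤ (U - U.dedup) + U.dedup := add_le_add hW hb1
          _ = U := Multiset.sub_add_cancel hdle
    · rw [Finset.card_insert_of_notMem h0'] at hCc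
      have key : ∑ g : G, min (U.count g) (l + 1)
          = ∑ g : G, min ((U - U.dedup).count g) l + U.toFinset.card := by
        have : U.toFinset.card = ∑ g : G, if g ∈ U then 1 else 0 := by
          rw [Finset.sum_boole]
          simp only [Nat.cast_id]
          congr 1
          ext; simp
        rw [this, ← Finset.sum_add_distrib]
        refine Finset.sum_congr rfl fun g _ => ?_
        rw [Multiset.count_sub, Multiset.count_dedup]
        by_cases hg : g ∈ U
        · have := Multiset.count_pos.mpr hg
          simp only [hg, if_true]
          omega
        · simp [hg]
      omega

/-- `S` has a factorization of length `k`. -/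
def Fac {G : Type*} [AddCommGroup G] (S : Multiset G) (k : ℕ) : Prop :=
  ∃ F : Multiset (Multiset G),
    (∀ B ∈ F, IsMinZS B) ∧ F.sum = S ∧ Multiset.card F = k

theorem Fac.add {G : Type*} [AddCommGroup G] {S T : Multiset G} {j k : ℕ}
    (hS : Fac S j) (hT : Fac T k) : Fac (S + T) (j + k) := by
  obtain ⟨F, hF, hFs, hFc⟩ := hS
  obtain ⟨F', hF', hFs', hFc'⟩ := hT
  refine ⟨F + F', ?_, by simp [hFs, hFs'], by simp [hFc, hFc']⟩
  intro B hB
  rcases Multiset.mem_add.mp hB with h | h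
  · exact hF B h
  · exact hF' B h

theorem exists_fac {G : Type*} [AddCommGroup G] (N : ℕ) :
    ∀ S : Multiset G, Multiset.card S ≤ N → S.sum = 0 → ∃ k, Fac S k := by
  induction N with
  | zero =>
    intro S hS _
    have : S = 0 := Multiset.card_eq_zero.mp (by omega)
    exact ⟨0, 0, by simp, by simp [this], by simp⟩
  | succ N ih =>
    intro S hS hsum
    by_cases h0 : S = 0
    · exact ⟨0, 0, by simp, by simp [h0], by simp⟩
    by_cases hm : IsMinZS S
    · exact ⟨1, {S}, by simpa using hm, by simp, by simp⟩
    · have : ∃ T ≤ S, T ≠ 0 ∧ T ≠ S ∧ T.sum = 0 := by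
        by_contra hcon
        push Not at hcon
        exact hm ⟨h0, hsum, hcon⟩
      obtain ⟨T, hT, hT0, hTS, hTs⟩ := this
      obtain ⟨R, rfl⟩ := Multiset.le_iff_exists_add.mp hT
      have hR0 : R ≠ 0 := fun h => hTS (by simp [h])
      have h1 := Multiset.card_pos.mpr hT0
      have h2 := Multiset.card_pos.mpr hR0
      rw [Multiset.card_add] at hS
      rw [Multiset.sum_add, hTs, zero_add] at hsum
      obtain ⟨j, hj⟩ := ih T (by omega) hTs
      obtain ⟨k, hk⟩ := ih R (by omega) hsum
      exact ⟨j + k, hj.add hk⟩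

/-- If every atom has weight at least `c`, the number of atoms is bounded. -/
theorem card_mul_le_weight {G : Type*} (w : Multiset G →+ ℕ) (c : ℕ)
    (F : Multiset (Multiset G)) (h : ∀ B ∈ F, c ≤ w B) :
    Multiset.card F * c ≤ w F.sum := by
  rw [map_multiset_sum]
  have := Multiset.card_nsmul_le_sum (s := F.map w) (a := c) (by
    intro x hx
    obtain ⟨B, hB, rfl⟩ := Multiset.mem_map.mp hx
    exact h B hB)
  simpa using this

theorem fac_half {G : Type*} [AddCommGroup G] (S : Multiset G) (h0 : (0 : G) ∉ S)
    (k : ℕ) (hk : Fac S k) : k * 2 ≤ Multiset.card S := by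
  obtain ⟨F, hF, rfl, rfl⟩ := hk
  refine card_mul_le_weight Multiset.cardHom 2 F ?_
  intro B hB
  obtain ⟨hB0, hBs, _⟩ := hF B hB
  change 2 ≤ Multiset.card B
  have h1 := Multiset.card_pos.mpr hB0
  by_contra hlt
  obtain ⟨g, rfl⟩ := Multiset.card_eq_one.mp (show Multiset.card B = 1 by omega)
  have hg : g = 0 := by simpa using hBs
  apply h0
  rw [← hg]
  exact Multiset.mem_of_le (Multiset.le_sum_of_mem hB) (Multiset.mem_singleton_self g)

open Classical in
/-- A zero-sum sequence `W g^m` with `m` less than the order of `g`. -/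
theorem fac_mixed {G : Type*} [AddCommGroup G] (W : Multiset G) (g : G) (m : ℕ)
    (hgW : g ∉ W)
    (hm : m < addOrderOf g) (k : ℕ) (hk : Fac (W + Multiset.replicate m g) k) :
    k ≤ Multiset.card W := by
  obtain ⟨F, hF, hFs, rfl⟩ := hk
  let w : Multiset G →+ ℕ := Multiset.countPAddMonoidHom (fun x => x ≠ g)
  have h1 := card_mul_le_weight w 1 F (by
    intro B hB
    obtain ⟨hB0, hBs, _⟩ := hF B hB
    change 1 ≤ Multiset.countP (fun x => x ≠ g) B
    rw [Nat.one_le_iff_ne_zero, ← Nat.pos_iff_ne_zero, Multiset.countP_pos]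
    by_contra hcon
    push Not at hcon
    have hrep := Multiset.eq_replicate_card.mpr hcon
    have hle : B ≤ W + Multiset.replicate m g := hFs ▸ Multiset.le_sum_of_mem hB
    have hc := Multiset.count_le_of_le g hle
    rw [Multiset.count_add, Multiset.count_eq_zero_of_notMem hgW, Multiset.count_replicate_self,
      hrep, Multiset.count_replicate_self] at hc
    rw [hrep, Multiset.sum_replicate] at hBs
    have hd := Nat.le_of_dvd (Multiset.card_pos.mpr hB0) (addOrderOf_dvd_of_nsmul_eq_zero hBs)
    omega)
  rw [hFs, mul_one] at h1
  refine h1.trans ?_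
  change Multiset.countP (fun x => x ≠ g) _ ≤ _
  rw [Multiset.countP_add]
  have h2 : Multiset.countP (fun x => x ≠ g) (Multiset.replicate m g) = 0 := by
    rw [Multiset.countP_eq_zero]
    intro a ha
    simpa using Multiset.eq_of_mem_replicate ha
  rw [h2]
  exact Multiset.countP_le_card _ _

open Classical in
/-- Extraction of a zero-sum subsequence with few atoms. -/
theorem extract_aux {G : Type*} [AddCommGroup G] [Fintype G] (M : ℕ) (hM : 1 ≤ M)
    (hcard : Fintype.card G = M + 1) (S : Multiset G)
    (hord : ∀ g ∈ S, addOrderOf g = M + 1) (hmult : ∀ g, S.count g ≤ M)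
    (hN : 3 * M ≤ Multiset.card S) :
    ∃ B ≤ S, B.sum = 0 ∧ B ≠ 0 ∧ ∀ k, Fac B k →
      k * (M + Multiset.card S) ≤ 2 * M * Multiset.card B := by
  have h0 : (0 : G) ∉ S := by
    intro h
    have := hord 0 h
    simp at this
    omega
  obtain ⟨g, -, hg⟩ := Finset.exists_max_image (Finset.univ : Finset G) (fun x => S.count x)
    ⟨0, Finset.mem_univ _⟩
  set m := S.count g with hm
  set N := Multiset.card S with hNdef
  have hmM : m ≤ M := hmult g
  -- total length bounded by `m * M`
  have hNm : N ≤ m * M := by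
    have h1 : N = ∑ x ∈ S.toFinset, S.count x := (Multiset.toFinset_sum_count_eq S).symm
    have h2 : S.toFinset ⊆ Finset.univ.erase 0 := by
      intro x hx
      simp only [Finset.mem_erase, Finset.mem_univ, and_true]
      rintro rfl
      exact h0 (by simpa using hx)
    have h3 := Finset.card_le_card h2
    rw [Finset.card_erase_of_mem (Finset.mem_univ _), Finset.card_univ, hcard] at h3
    have h4 : ∑ x ∈ S.toFinset, S.count x ≤ S.toFinset.card • m :=
      Finset.sum_le_card_nsmul _ _ _ (fun x _ => hg x (Finset.mem_univ x))
    rw [smul_eq_mul] at h4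
    rw [h1]
    refine h4.trans ?_
    rw [mul_comm m M]
    exact Nat.mul_le_mul_right _ (by omega)
  have hmpos : 0 < m := by
    rcases Nat.eq_zero_or_pos m with h | h
    · rw [h] at hNm; omega
    · exact h
  have hgS : g ∈ S := Multiset.count_pos.mp hmpos
  set U := S - Multiset.replicate m g with hU
  have hrep : Multiset.replicate m g ≤ S := Multiset.le_count_iff_replicate_le.mp le_rfl
  have hSU : U + Multiset.replicate m g = S := Multiset.sub_add_cancel hrep
  have hUle : U ≤ S := Multiset.sub_le_self _ _
  have hcU : Multiset.card U + m = N := by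
    rw [hNdef, ← hSU]; simp
  have hgU : g ∉ U := by
    rw [← Multiset.count_eq_zero, hU, Multiset.count_sub, Multiset.count_replicate_self]
    omega
  have hUpos : 0 < Multiset.card U := by omega
  set u := Multiset.card U with hu
  -- the minimal admissible `l`
  have hex : ∃ l, m * M ≤ l * u := ⟨m, Nat.mul_le_mul_left _ (by omega)⟩
  set l := Nat.find hex with hl
  have hl1 : m * M ≤ l * u := Nat.find_spec hex
  have hlm : l ≤ m := Nat.find_min' hex (Nat.mul_le_mul_left _ (by omega))
  have hlpos : 0 < l := by
    rcases Nat.eq_zero_or_pos l with h | h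
    · rw [h] at hl1
      have : 0 < m * M := Nat.mul_pos hmpos hM
      omega
    · exact h
  have hl2 : (l - 1) * u < m * M := by
    have := Nat.find_min hex (m := l - 1) (by omega)
    omega
  obtain ⟨C, hC, hCc⟩ := subsums_aux l U
    (fun x hx => by rw [hcard]; exact hord x (Multiset.mem_of_le hUle hx))
    (fun hx => h0 (Multiset.mem_of_le hUle hx))
  have hsum : M ≤ ∑ x : G, min (U.count x) l := by
    have h1 : l * u ≤ m * ∑ x : G, min (U.count x) l := by
      have : u = ∑ x : G, U.count x := by
        rw [hu, ← Multiset.toFinset_sum_count_eq U]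
        exact Finset.sum_subset (Finset.subset_univ _)
          (fun x _ hx => Multiset.count_eq_zero_of_notMem (by simpa using hx))
      rw [this, Finset.mul_sum, Finset.mul_sum]
      refine Finset.sum_le_sum fun x _ => ?_
      have hx : U.count x ≤ m := (Multiset.count_le_of_le x hUle).trans (hg x (Finset.mem_univ x))
      rcases le_total (U.count x) l with h | h
      · rw [min_eq_left h]; exact Nat.mul_le_mul_right _ hlm
      · rw [min_eq_right h, mul_comm]; exact Nat.mul_le_mul_right _ hx
    exact Nat.le_of_mul_le_mul_left (hl1.trans h1) hmpos
  have hCu : C = Finset.univ := by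
    rw [← Finset.card_eq_iff_eq_univ]
    have := Finset.card_le_univ C
    omega
  obtain ⟨W, hW, hWc, hWs⟩ := hC (-(m • g)) (by rw [hCu]; exact Finset.mem_univ _)
  refine ⟨W + Multiset.replicate m g, ?_, ?_, ?_, ?_⟩
  · rw [← hSU]; exact add_le_add hW le_rfl
  · rw [Multiset.sum_add, hWs, Multiset.sum_replicate]; simp
  · intro h
    have := congrArg Multiset.card h
    simp at this
    omega
  · intro k hk
    have hkW := fac_mixed W g m (fun h => hgU (Multiset.mem_of_le hW h))
      (by rw [hord g hgS]; omega) k hk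
    rw [Multiset.card_add, Multiset.card_replicate]
    obtain ⟨l', hl'⟩ : ∃ l', l = l' + 1 := ⟨l - 1, by omega⟩
    have hlu : l * u ≤ 2 * (m * M) := by
      rw [hl'] at hl2 ⊢
      simp only [Nat.add_sub_cancel] at hl2
      rw [Nat.add_mul]
      omega
    have hku : k * u ≤ 2 * (m * M) := (Nat.mul_le_mul_right u (hkW.trans hWc)).trans hlu
    have hkM : k * m ≤ k * M := Nat.mul_le_mul_left k hmM
    have hkW2 : k * M ≤ Multiset.card W * M := Nat.mul_le_mul_right M hkW
    rw [← hcU]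
    nlinarith

open Classical in
theorem phase_two {G : Type*} [AddCommGroup G] [Fintype G] (M : ℕ) (hM : 1 ≤ M)
    (hcard : Fintype.card G = M + 1) (N : ℕ) : ∀ (S : Multiset G),
    Multiset.card S ≤ N → S.sum = 0 →
    (∀ g ∈ S, addOrderOf g = M + 1) → (∀ g, S.count g ≤ M) →
    ∃ k, Fac S k ∧ (k : ℝ) ≤ 2 * M * Real.log (1 + (Multiset.card S : ℝ) / M) := by
  have hMr : (0 : ℝ) < M := by exact_mod_cast hM
  -- base case estimate
  have base : ∀ S : Multiset G, Multiset.card S ≤ 3 * M → S.sum = 0 →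
      (∀ g ∈ S, addOrderOf g = M + 1) →
      ∃ k, Fac S k ∧ (k : ℝ) ≤ 2 * M * Real.log (1 + (Multiset.card S : ℝ) / M) := by
    intro S hS hsum hord
    obtain ⟨k, hk⟩ := exists_fac _ S le_rfl hsum
    refine ⟨k, hk, ?_⟩
    have h0 : (0 : G) ∉ S := by
      intro h
      have := hord 0 h
      simp at this
      omega
    have h2 := fac_half S h0 k hk
    have h2r : (k : ℝ) * 2 ≤ (Multiset.card S : ℝ) := by exact_mod_cast h2
    have hSr : (Multiset.card S : ℝ) ≤ 3 * M := by exact_mod_cast hS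
    have hS0 : (0 : ℝ) ≤ Multiset.card S := Nat.cast_nonneg _
    generalize (Multiset.card S : ℝ) = s at *
    have hpos : 0 < 1 + s / M := by positivity
    have hlog := Real.one_sub_inv_le_log_of_pos hpos
    have h3 : 1 - (1 + s / M)⁻¹ = s / (M + s) := by
      field_simp
      ring
    rw [h3] at hlog
    have h4 : s / (4 * M) ≤ s / (M + s) := by
      apply div_le_div_of_nonneg_left hS0 (by positivity) (by linarith)
    calc (k : ℝ) ≤ s / 2 := by linarith
      _ = 2 * M * (s / (4 * M)) := by field_simp; ring
      _ ≤ _ := by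
        apply mul_le_mul_of_nonneg_left (h4.trans hlog) (by positivity)
  induction N with
  | zero =>
    intro S hS hsum hord _
    exact base S (by omega) hsum hord
  | succ N ih =>
    intro S hS hsum hord hmult
    rcases le_total (Multiset.card S) (3 * M) with h | h
    · exact base S h hsum hord
    obtain ⟨B, hB, hBs, hB0, hBk⟩ := extract_aux M hM hcard S hord hmult h
    obtain ⟨R, rfl⟩ := Multiset.le_iff_exists_add.mp hB
    have hBpos := Multiset.card_pos.mpr hB0
    rw [Multiset.sum_add, hBs, zero_add] at hsum
    rw [Multiset.card_add] at hS h
    obtain ⟨j, hj, hjle⟩ := ih R (by omega) hsum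
      (fun g hg => hord g (Multiset.mem_add.mpr (Or.inr hg)))
      (fun g => by
        have := hmult g
        rw [Multiset.count_add] at this
        omega)
    obtain ⟨k, hk⟩ := exists_fac _ B le_rfl hBs
    refine ⟨k + j, hk.add hj, ?_⟩
    have hkk := hBk k hk
    rw [Multiset.card_add] at hkk ⊢
    have hkr : (k : ℝ) * (M + (Multiset.card B + Multiset.card R))
        ≤ 2 * M * Multiset.card B := by exact_mod_cast hkk
    push_cast
    have hb : (0 : ℝ) ≤ Multiset.card B := Nat.cast_nonneg _
    have hr : (0 : ℝ) ≤ Multiset.card R := Nat.cast_nonneg _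
    generalize (Multiset.card B : ℝ) = b at *
    generalize (Multiset.card R : ℝ) = r at *
    have hp1 : 0 < 1 + (b + r) / M := by positivity
    have hp2 : 0 < 1 + r / M := by positivity
    have hlog := Real.one_sub_inv_le_log_of_pos (div_pos hp1 hp2)
    rw [Real.log_div hp1.ne' hp2.ne'] at hlog
    have h3 : 1 - ((1 + (b + r) / M) / (1 + r / M))⁻¹ = b / (M + (b + r)) := by
      field_simp
      ring
    rw [h3] at hlog
    have h5 : (k : ℝ) ≤ 2 * M * (b / (M + (b + r))) := by
      rw [← mul_div_assoc, le_div_iff₀ (by positivity)]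
      exact hkr
    have h6 := mul_le_mul_of_nonneg_left hlog (show (0 : ℝ) ≤ 2 * M by positivity)
    linarith

open Classical in
theorem phase_one {G : Type*} [AddCommGroup G] [Fintype G] (M : ℕ) (hM : 1 ≤ M)
    (hcard : Fintype.card G = M + 1) (N : ℕ) : ∀ (S : Multiset G),
    Multiset.card S ≤ N → S.sum = 0 →
    (∀ g ∈ S, addOrderOf g = M + 1) →
    ∃ k, Fac S k ∧ (k : ℝ) ≤ 2 * (Multiset.card S : ℝ) / (M + 2) +
      2 * M * Real.log (1 + M) := by
  have hMr : (0 : ℝ) < M := by exact_mod_cast hM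
  induction N with
  | zero =>
    intro S hS _ _
    have : S = 0 := Multiset.card_eq_zero.mp (by omega)
    refine ⟨0, ⟨0, by simp, by simp [this], by simp⟩, ?_⟩
    have := Real.log_nonneg (show (1 : ℝ) ≤ 1 + M by linarith)
    push_cast
    positivity
  | succ N ih =>
    intro S hS hsum hord
    by_cases hmult : ∀ g, S.count g ≤ M
    · obtain ⟨k, hk, hkle⟩ := phase_two M hM hcard _ S le_rfl hsum hord hmult
      refine ⟨k, hk, hkle.trans ?_⟩
      have h0 : (0 : G) ∉ S := by
        intro h
        have := hord 0 h
        simp at this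
        omega
      have hNm : Multiset.card S ≤ M * M := by
        have h1 : Multiset.card S = ∑ x ∈ S.toFinset, S.count x :=
          (Multiset.toFinset_sum_count_eq S).symm
        have h2 : S.toFinset ⊆ Finset.univ.erase 0 := by
          intro x hx
          simp only [Finset.mem_erase, Finset.mem_univ, and_true]
          rintro rfl
          exact h0 (by simpa using hx)
        have h3 := Finset.card_le_card h2
        rw [Finset.card_erase_of_mem (Finset.mem_univ _), Finset.card_univ, hcard] at h3
        have h4 : ∑ x ∈ S.toFinset, S.count x ≤ S.toFinset.card • M :=
          Finset.sum_le_card_nsmul _ _ _ (fun x _ => hmult x)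
        rw [smul_eq_mul] at h4
        rw [h1]
        exact h4.trans (Nat.mul_le_mul_right _ (by omega))
      have hNr : (Multiset.card S : ℝ) ≤ M * M := by exact_mod_cast hNm
      have h5 : (Multiset.card S : ℝ) / M ≤ M := by
        rw [div_le_iff₀ hMr]; exact hNr
      have h6 : Real.log (1 + (Multiset.card S : ℝ) / M) ≤ Real.log (1 + M) :=
        Real.log_le_log (by positivity) (by linarith)
      have h7 := mul_le_mul_of_nonneg_left h6 (show (0 : ℝ) ≤ 2 * M by positivity)
      have h8 : (0 : ℝ) ≤ 2 * (Multiset.card S : ℝ) / (M + 2) := by positivity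
      linarith
    · push Not at hmult
      obtain ⟨g, hg⟩ := hmult
      have hrep : Multiset.replicate (M + 1) g ≤ S :=
        Multiset.le_count_iff_replicate_le.mp hg
      have hgS : g ∈ S := Multiset.count_pos.mp (by omega)
      have hog := hord g hgS
      have hatom : Fac (Multiset.replicate (M + 1) g) 1 := by
        refine ⟨{Multiset.replicate (M + 1) g}, ?_, by simp, by simp⟩
        intro B hB
        rw [Multiset.mem_singleton] at hB
        subst hB
        refine ⟨?_, ?_, ?_⟩
        · intro h
          have := congrArg Multiset.card h
          simp at this
        · rw [Multiset.sum_replicate, ← hog]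
          exact addOrderOf_nsmul_eq_zero g
        · intro T hT hT0 hTne hTs
          obtain ⟨j, hj, rfl⟩ := Multiset.le_replicate_iff.mp hT
          rw [Multiset.sum_replicate] at hTs
          have hjpos : 0 < j := by
            rcases Nat.eq_zero_or_pos j with h | h
            · simp [h] at hT0
            · exact h
          have hd := Nat.le_of_dvd hjpos (addOrderOf_dvd_of_nsmul_eq_zero hTs)
          apply hTne
          rw [show j = M + 1 by omega]
      obtain ⟨R, rfl⟩ := Multiset.le_iff_exists_add.mp hrep
      rw [Multiset.sum_add, Multiset.sum_replicate, ← hog, addOrderOf_nsmul_eq_zero,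
        zero_add] at hsum
      rw [Multiset.card_add, Multiset.card_replicate] at hS
      obtain ⟨k, hk, hkle⟩ := ih R (by omega) hsum
        (fun x hx => hord x (Multiset.mem_add.mpr (Or.inr hx)))
      refine ⟨1 + k, hatom.add hk, ?_⟩
      rw [Multiset.card_add, Multiset.card_replicate]
      push_cast
      have h1 : (1 : ℝ) ≤ 2 * (M + 1) / (M + 2) := by
        rw [le_div_iff₀ (by positivity)]
        linarith
      have h2 : 2 * ((M : ℝ) + 1 + Multiset.card R) / (M + 2)
          = 2 * (M + 1) / (M + 2) + 2 * (Multiset.card R : ℝ) / (M + 2) := by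
        rw [← add_div]; ring
      rw [h2]
      linarith

theorem stmt10 (G : Type*) [AddCommGroup G] [Fintype G] (hcyc : IsAddCyclic G)
    (p α n : ℕ) (hp : p.Prime) (hα : 2 ≤ α) (hnpα : n = p ^ α)
    (hcard : Fintype.card G = n)
    (S : Multiset G) (hord : ∀ g ∈ S, addOrderOf g = n) (hsum : S.sum = 0) :
    (minL S : ℝ) ≤ min ((Multiset.card S : ℝ) / 2)
      (2 * (Multiset.card S : ℝ) / (n + 1) +
        3 * ((n : ℝ) - 1) * (1 / 2 + Real.log ((n : ℝ) / 2))) := by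
  have hn4 : 4 ≤ n := by
    rw [hnpα]
    calc 4 = 2 ^ 2 := by norm_num
      _ ≤ p ^ 2 := Nat.pow_le_pow_left hp.two_le 2
      _ ≤ p ^ α := Nat.pow_le_pow_right hp.pos hα
  have hmin : ∀ k, Fac S k → minL S ≤ k := fun k hk => Nat.sInf_le hk
  have h0 : (0 : G) ∉ S := by
    intro h
    have := hord 0 h
    simp at this
    omega
  apply le_min
  · obtain ⟨k, hk⟩ := exists_fac _ S le_rfl hsum
    have h1 := fac_half S h0 k hk
    have h2 := hmin k hk
    have h3 : (minL S : ℝ) * 2 ≤ (Multiset.card S : ℝ) := by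
      exact_mod_cast (Nat.mul_le_mul_right 2 h2).trans h1
    linarith
  · obtain ⟨M, rfl⟩ : ∃ M, n = M + 1 := ⟨n - 1, by omega⟩
    obtain ⟨k, hk, hkle⟩ := phase_one M (by omega) hcard _ S le_rfl hsum hord
    have h2 : (minL S : ℝ) ≤ k := by exact_mod_cast hmin k hk
    refine h2.trans (hkle.trans ?_)
    push_cast
    have hM3 : (3 : ℝ) ≤ M := by exact_mod_cast (show 3 ≤ M by omega)
    rw [show (M : ℝ) + 1 + 1 = M + 2 by ring, show (M : ℝ) + 1 - 1 = M by ring,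
      add_comm (1 : ℝ) (M : ℝ), Real.log_div (by positivity) (by norm_num)]
    have hl2 := Real.log_two_lt_d9
    have hl2' := Real.log_two_gt_d9
    have hlM : 2 * Real.log 2 ≤ Real.log ((M : ℝ) + 1) := by
      rw [show (2 : ℝ) * Real.log 2 = Real.log (2 ^ 2) by rw [Real.log_pow]; norm_num]
      exact Real.log_le_log (by norm_num) (by linarith)
    have h9 : 2 * Real.log ((M : ℝ) + 1)
        ≤ 3 * (1 / 2 + (Real.log ((M : ℝ) + 1) - Real.log 2)) := by linarith
    have h10 := mul_le_mul_of_nonneg_left h9 (show (0 : ℝ) ≤ M by linarith)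
    linarith
end

section
/- Let n be a positive integer with ω(n) = s ≥ 2 distinct prime factors and n ≥ 4376. Then ⌊(n+1)/(2^{s+1}√(2s−1)+1)⌋ ≥ n/(2^{s+1}√(2s)). -/
open Nat in
theorem prod_primes_lower (k : ℕ) : ∀ P : Finset ℕ, (∀ p ∈ P, p.Prime) → P.card = k + 1 →
    2 * (2 * k + 1)‼ ≤ ∏ p ∈ P, p := by
  induction k with
  | zero =>
    intro P hP hc
    obtain ⟨p, rfl⟩ := Finset.card_eq_one.mp (by simpa using hc)
    have := (hP p (by simp)).two_le
    simpa using this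
  | succ k ih =>
    intro P hP hc
    have hne : P.Nonempty := by
      rw [← Finset.card_pos]; omega
    set m := P.max' hne with hm
    have hmP : m ∈ P := Finset.max'_mem _ _
    have hmax : 2 * k + 3 ≤ m := by
      by_contra hlt
      have hsub : P ⊆ insert 2 ((Finset.range k).image (fun i => 2 * i + 3)) := by
        intro p hp
        have h1 : p ≤ m := Finset.le_max' _ _ hp
        have h2 := (hP p hp).two_le
        have h3 : m ≤ 2 * k + 2 := by omega
        rcases (hP p hp).eq_two_or_odd with h | h
        · simp [h]
        · simp only [Finset.mem_insert, Finset.mem_image, Finset.mem_range]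
          right
          exact ⟨(p - 3) / 2, by omega, by omega⟩
      have h1 := Finset.card_le_card hsub
      have h2 := Finset.card_insert_le 2 ((Finset.range k).image (fun i => 2 * i + 3))
      have h3 := Finset.card_image_le (s := Finset.range k) (f := fun i => 2 * i + 3)
      rw [Finset.card_range] at h3
      omega
    have h := ih (P.erase m) (fun p hp => hP p (Finset.mem_of_mem_erase hp))
      (by rw [Finset.card_erase_of_mem hmP]; omega)
    rw [← Finset.mul_prod_erase P (fun p => p) hmP]
    have e : (2 * (k + 1) + 1)‼ = (2 * k + 3) * (2 * k + 1)‼ := by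
      rw [show 2 * (k + 1) + 1 = (2 * k + 1) + 2 by ring, Nat.doubleFactorial_add_two]
    rw [e]
    calc 2 * ((2 * k + 3) * (2 * k + 1)‼) = (2 * k + 3) * (2 * (2 * k + 1)‼) := by ring
      _ ≤ _ := Nat.mul_le_mul hmax h

open Nat in
theorem dfact_lower (k : ℕ) (hk : 5 ≤ k) :
    16 * (2 ^ (k + 2) * ((k + 1) ^ 2 + 8 * (k + 1))) ≤ 15 * (2 * (2 * k + 1)‼) := by
  induction k, hk using Nat.le_induction with
  | base => decide
  | succ k hk ih =>
    have e : (2 * (k + 1) + 1)‼ = (2 * k + 3) * (2 * k + 1)‼ := by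
      rw [show 2 * (k + 1) + 1 = (2 * k + 1) + 2 by ring, Nat.doubleFactorial_add_two]
    rw [e]
    have h1 : 2 * ((k + 1 + 1) ^ 2 + 8 * (k + 1 + 1)) ≤
        (2 * k + 3) * ((k + 1) ^ 2 + 8 * (k + 1)) := by nlinarith
    calc 16 * (2 ^ (k + 1 + 2) * ((k + 1 + 1) ^ 2 + 8 * (k + 1 + 1)))
        = 16 * (2 ^ (k + 2) * (2 * ((k + 1 + 1) ^ 2 + 8 * (k + 1 + 1)))) := by ring
      _ ≤ 16 * (2 ^ (k + 2) * ((2 * k + 3) * ((k + 1) ^ 2 + 8 * (k + 1)))) := by gcongr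
      _ = (2 * k + 3) * (16 * (2 ^ (k + 2) * ((k + 1) ^ 2 + 8 * (k + 1)))) := by ring
      _ ≤ (2 * k + 3) * (15 * (2 * (2 * k + 1)‼)) := by gcongr
      _ = _ := by ring

theorem pow_lower (s : ℕ) (hs : 6 ≤ s) : 8 * s + 64 ≤ 2 ^ (s + 1) := by
  induction s, hs using Nat.le_induction with
  | base => norm_num
  | succ k hk ih => rw [pow_succ]; omega

/-- The main inequality implies the floor inequality. -/
theorem floor_reduce (n T a b : ℝ) (hT : 0 < T) (ha : 0 ≤ a) (hb : 0 < b)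
    (h : T ^ 2 * (a * b) ≤ n * (T * (b - a) - 1)) :
    n / (T * b) ≤ (⌊(n + 1) / (T * a + 1)⌋₊ : ℝ) := by
  have hA : 0 < T * a + 1 := by positivity
  have hB : 0 < T * b := by positivity
  have h1 := Nat.lt_floor_add_one ((n + 1) / (T * a + 1))
  have h2 : n / (T * b) ≤ (n + 1) / (T * a + 1) - 1 := by
    rw [div_sub_one hA.ne', div_le_div_iff₀ hB hA]
    nlinarith
  linarith

theorem small_case (n T a b l u : ℝ) (hn : 4376 ≤ n) (hT : 0 < T) (ha : 0 ≤ a) (hau : a ≤ u)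
    (hl : 0 ≤ l) (hbl : l ≤ b) (hTn : T ≤ 64) (hu : u ≤ 4) 
    (h : T ^ 2 * (u * l) ≤ 4376 * (T * (l - u) - 1)) :
    T ^ 2 * (a * b) ≤ n * (T * (b - a) - 1) := by
  have h0 : 0 ≤ T ^ 2 * (u * l) := by have := ha.trans hau; positivity
  have h1 : 0 ≤ T * (l - u) - 1 := by linarith
  have h2 : T * (l - u) ≤ T * (b - a) := by gcongr
  have h3 : 4376 * (T * (b - a) - 1) ≤ n * (T * (b - a) - 1) := by
    apply mul_le_mul_of_nonneg_right hn; linarith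
  have hb : 0 ≤ b := hl.trans hbl
  have h4 : T ^ 2 * (a * b) ≤ T ^ 2 * (u * b) := by gcongr
  have h5 : T * (b - u) ≤ T * (b - a) := by gcongr
  have h6 : T * u ≤ 64 * 4 := by
    have := ha.trans hau
    gcongr
  have h7 : 0 ≤ T * (4376 - T * u) * (b - l) := by
    apply mul_nonneg (mul_nonneg hT.le (by linarith)) (by linarith)
  nlinarith

theorem stmt14 (n s : ℕ) (hn : 4376 ≤ n)
    (hs : n.primeFactors.card = s) (h2 : 2 ≤ s) :
    (n : ℝ) / (2 ^ (s + 1) * Real.sqrt (2 * s)) ≤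
      (⌊((n : ℝ) + 1) / (2 ^ (s + 1) * Real.sqrt (2 * s - 1) + 1)⌋₊ : ℝ) := by
  have hs2 : (2 : ℝ) ≤ s := by exact_mod_cast h2
  have hnR : (4376 : ℝ) ≤ n := by exact_mod_cast hn
  apply floor_reduce _ _ _ _ (by positivity) (Real.sqrt_nonneg _) (Real.sqrt_pos.mpr (by linarith))
  rcases Nat.lt_or_ge s 6 with h6 | h6
  · clear hs
    interval_cases s
    · apply small_case n _ _ _ (2 : ℝ) (1.7321 : ℝ) hnR (by positivity) (Real.sqrt_nonneg _)
      · rw [Real.sqrt_le_left (by norm_num)]; norm_num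
      · norm_num
      · apply Real.le_sqrt_of_sq_le; norm_num
      all_goals norm_num
    · apply small_case n _ _ _ (2.449 : ℝ) (2.237 : ℝ) hnR (by positivity) (Real.sqrt_nonneg _)
      · rw [Real.sqrt_le_left (by norm_num)]; norm_num
      · norm_num
      · apply Real.le_sqrt_of_sq_le; norm_num
      all_goals norm_num
    · apply small_case n _ _ _ (2.828 : ℝ) (2.646 : ℝ) hnR (by positivity) (Real.sqrt_nonneg _)
      · rw [Real.sqrt_le_left (by norm_num)]; norm_num
      · norm_num
      · apply Real.le_sqrt_of_sq_le; norm_num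
      all_goals norm_num
    · apply small_case n _ _ _ (3.162 : ℝ) (3 : ℝ) hnR (by positivity) (Real.sqrt_nonneg _)
      · rw [Real.sqrt_le_left (by norm_num)]; norm_num
      · norm_num
      · apply Real.le_sqrt_of_sq_le; norm_num
      all_goals norm_num
  · have hnat : 16 * (2 ^ (s + 1) * (s ^ 2 + 8 * s)) ≤ 15 * n := by
      obtain ⟨k, rfl⟩ : ∃ k, s = k + 1 := ⟨s - 1, by omega⟩
      have e1 := prod_primes_lower k n.primeFactors (fun p hp => Nat.prime_of_mem_primeFactors hp) hs
      have e2 := dfact_lower k (by omega)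
      have e3 := Nat.le_of_dvd (by omega) (Nat.prod_primeFactors_dvd n)
      calc _ ≤ _ := e2
        _ ≤ _ := Nat.mul_le_mul_left 15 (e1.trans e3)
    have hR : 16 * ((2:ℝ) ^ (s + 1) * (s ^ 2 + 8 * s)) ≤ 15 * n := by exact_mod_cast hnat
    have hp : 8 * (s : ℝ) + 64 ≤ 2 ^ (s + 1) := by exact_mod_cast pow_lower s h6
    generalize (2 : ℝ) ^ (s + 1) = T at *
    have ha2 := Real.sq_sqrt (show (0 : ℝ) ≤ 2 * s - 1 by linarith)
    have hb2 := Real.sq_sqrt (show (0 : ℝ) ≤ 2 * s by linarith)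
    have hab : Real.sqrt (2 * s - 1) ≤ Real.sqrt (2 * s) := Real.sqrt_le_sqrt (by linarith)
    have ha0 := Real.sqrt_nonneg (2 * (s : ℝ) - 1)
    generalize Real.sqrt (2 * (s : ℝ) - 1) = a at *
    generalize Real.sqrt (2 * (s : ℝ)) = b at *
    generalize (s : ℝ) = x at *
    generalize (n : ℝ) = N at *
    have hb0 : 0 ≤ b := ha0.trans hab
    have hT : 0 < T := by linarith
    have h1 : a * b ≤ 2 * x := by nlinarith
    have h2 : a + b ≤ x / 2 + 4 := by nlinarith [sq_nonneg (b - 4)]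
    have hx : 0 < x / 2 + 4 := by linarith
    have h3 : 1 ≤ (b - a) * (x / 2 + 4) := by nlinarith
    have h4 : 1 / (x / 2 + 4) ≤ b - a := by rwa [div_le_iff₀ hx]
    have h5 : 15 / 16 * T / (x / 2 + 4) ≤ T * (b - a) - 1 := by
      have : 15 / 16 * T / (x / 2 + 4) ≤ T * (1 / (x / 2 + 4)) - 1 := by
        rw [div_le_iff₀ hx, sub_mul, mul_assoc, one_div_mul_cancel hx.ne']
        linarith
      have := mul_le_mul_of_nonneg_left h4 hT.le
      linarith
    calc T ^ 2 * (a * b) ≤ T ^ 2 * (2 * x) := by gcongr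
      _ ≤ N * (15 / 16 * T / (x / 2 + 4)) := by
        rw [← mul_div_assoc, le_div_iff₀ hx]
        nlinarith
      _ ≤ _ := by
        apply mul_le_mul_of_nonneg_left h5; linarith
end
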